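/- If an LD-derivation D = Q0,Q1,…;θ1,θ2,… is a lift of an unrestricted LD-derivation E = R0,R1,…;α1,α2,…, then each R_i is an instance of Q_i (hence D is successful iff E is successful), and moreover R_iα_{i+1}⋯α_j is an instance of Q_iθ_{i+1}⋯θ_j for all i < j for which R_i,…,R_j are queries of E; in particular, if E is successful then the answer of E is an instance of the answer of D. -/

import Mathlib

/-! The proof simulates `E` by `D`, one step at a time, with a single witnessing substitution.
Fix `i`.  For `k = 0, 1, …` there is one substitution `δ` such that both
`R_{i+k} = Q_{i+k} δ` and `R_i α_{i+1} ⋯ α_{i+k} = (Q_i θ_{i+1} ⋯ θ_{i+k}) δ`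
(`lift_invariant`).  Keeping the same `δ` in both equations is what lets the induction go through.

For a resolution step (`lift_step`), let `A` be the selected atom of the query of `D`, let `α` be the
specialization used by `E`, and let `H ← B` be the clause variant used by `D`; the clause instance
used by `E` is `(H ← B) η` for some `η`.  Define `σ` to be `η` on the variables of `H ← B` and `δ α`
on all other variables.  As `H ← B` is standardized apart, `σ` unifies `A` and `H`, hence factors
through the mgu `θ` as `σ = θ δ'`, and `δ'` is the next witness.  The second equation is preserved
because the variables of `Q_i θ_{i+1} ⋯ θ_{i+k}` all belong to the history of the derivation
(`vars_answer_subset`), on which `σ` coincides with `δ α`. -/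

/- Formalization of definite clause programs with the cut (Prolog),
   LD-resolution, LD-trees, pruning by the cut, specifications,
   correctness and completeness notions. -/

namespace LP

/-- First-order terms over function symbols `F`; variables are indexed by `ℕ`. -/
inductive Tm (F : Type) : Type
  | var : ℕ → Tm F
  | fn  : F → List (Tm F) → Tm F

/-- Ordinary (non-cut) atoms over function symbols `F` and predicate symbols `Pr`. -/
structure Atom (F Pr : Type) : Type where
  pred : Pr
  args : List (Tm F)

/-- Extended atoms: ordinary atoms together with the cut `!`. -/
inductive EAtom (F Pr : Type) : Type
  | cut : EAtom F Pr
  | atm : Atom F Pr → EAtom F Pr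

/-- A query is a finite sequence of extended atoms. -/
abbrev Query (F Pr : Type) := List (EAtom F Pr)

/-- A definite clause (whose body may contain cuts). -/
structure Clause (F Pr : Type) : Type where
  head : Atom F Pr
  body : Query F Pr

/-- A program (with cuts) is a finite sequence of clauses. -/
abbrev Prog (F Pr : Type) := List (Clause F Pr)

/-- Substitutions. -/
abbrev Subst (F : Type) := ℕ → Tm F

variable {F Pr : Type}

/-- The empty (identity) substitution. -/
def Subst.idS : Subst F := fun n => Tm.var n

/-- Applying a substitution to a term. -/
def Tm.subst (θ : Subst F) : Tm F → Tm F
  | .var n => θ n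
  | .fn f ts => .fn f (ts.attach.map (fun t => Tm.subst θ t.1))
decreasing_by
  have := List.sizeOf_lt_of_mem t.2
  simp only [Tm.fn.sizeOf_spec]
  omega

/-- The list of variables of a term. -/
def Tm.varsL : Tm F → List ℕ
  | .var n => [n]
  | .fn _ ts => ts.attach.flatMap (fun t => Tm.varsL t.1)
decreasing_by
  have := List.sizeOf_lt_of_mem t.2
  simp only [Tm.fn.sizeOf_spec]
  omega

/-- The set of variables of a term. -/
def Tm.vars (t : Tm F) : Set ℕ := {n | n ∈ t.varsL}

/-- A term is ground if it has no variables. -/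
def Tm.Ground (t : Tm F) : Prop := t.vars = ∅

def Atom.subst (θ : Subst F) (A : Atom F Pr) : Atom F Pr :=
  ⟨A.pred, A.args.map (Tm.subst θ)⟩

def Atom.vars (A : Atom F Pr) : Set ℕ := {n | ∃ t ∈ A.args, n ∈ t.vars}

/-- A ground atom (an element of the Herbrand base `HB` when it moreover holds). -/
def Atom.Ground (A : Atom F Pr) : Prop := A.vars = ∅

def EAtom.subst (θ : Subst F) : EAtom F Pr → EAtom F Pr
  | .cut => .cut
  | .atm A => .atm (Atom.subst θ A)

def EAtom.vars : EAtom F Pr → Set ℕ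
  | .cut => ∅
  | .atm A => A.vars

def EAtom.Ground (a : EAtom F Pr) : Prop := a.vars = ∅

def Query.subst (θ : Subst F) (Q : Query F Pr) : Query F Pr := Q.map (EAtom.subst θ)

def Query.vars (Q : Query F Pr) : Set ℕ := {n | ∃ a ∈ Q, n ∈ EAtom.vars a}

def Query.Ground (Q : Query F Pr) : Prop := Query.vars Q = ∅

def Clause.subst (θ : Subst F) (C : Clause F Pr) : Clause F Pr :=
  ⟨Atom.subst θ C.head, Query.subst θ C.body⟩

def Clause.vars (C : Clause F Pr) : Set ℕ := C.head.vars ∪ Query.vars C.body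

def Clause.Ground (C : Clause F Pr) : Prop := C.vars = ∅

/-- The domain of a substitution. -/
def Subst.dom (θ : Subst F) : Set ℕ := {n | θ n ≠ .var n}

/-- The range variables of a substitution. -/
def Subst.rng (θ : Subst F) : Set ℕ := {m | ∃ n, θ n ≠ .var n ∧ m ∈ (θ n).vars}

/-- All variables of a substitution. -/
def Subst.varSet (θ : Subst F) : Set ℕ := θ.dom ∪ θ.rng

/-- Composition: apply `θ` first, then `σ`. -/
def Subst.comp (θ σ : Subst F) : Subst F := fun n => (θ n).subst σ

/-- A substitution is idempotent when its domain and range are disjoint. -/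
def Subst.Idempotent (θ : Subst F) : Prop := Disjoint θ.dom θ.rng

/-- A substitution is ground if it maps every domain variable to a ground term. -/
def Subst.GroundOn (θ : Subst F) : Prop := ∀ n ∈ θ.dom, (θ n).Ground

/-- `compN θ i k` is the composition `θ i ; θ (i+1) ; ⋯ ; θ (i+k-1)`. -/
def compN (θ : ℕ → Subst F) : ℕ → ℕ → Subst F
  | _, 0 => Subst.idS
  | i, k+1 => Subst.comp (θ i) (compN θ (i+1) k)

/-- `θ` unifies atoms `A` and `B`. -/
def Unifies (θ : Subst F) (A B : Atom F Pr) : Prop := Atom.subst θ A = Atom.subst θ B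

/-- `θ` is a most general unifier of `A` and `B`. -/
def IsMgu (θ : Subst F) (A B : Atom F Pr) : Prop :=
  Unifies θ A B ∧ ∀ σ : Subst F, Unifies σ A B → ∃ δ : Subst F, ∀ n, σ n = (θ n).subst δ

/-- A unifier is relevant if all its variables occur in the unified atoms. -/
def Relevant (θ : Subst F) (A B : Atom F Pr) : Prop := θ.varSet ⊆ A.vars ∪ B.vars

/-- `B` is an instance of `A`. -/
def Atom.Inst (B A : Atom F Pr) : Prop := ∃ θ : Subst F, B = Atom.subst θ A

/-- `Q'` is an instance of `Q`. -/
def Query.Inst (Q' Q : Query F Pr) : Prop := ∃ θ : Subst F, Q' = Query.subst θ Q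

/-- `C'` is an instance of `C`. -/
def Clause.Inst (C' C : Clause F Pr) : Prop := ∃ θ : Subst F, C' = Clause.subst θ C

/-- `C` and `C'` are variants of each other. -/
def Variant (C C' : Clause F Pr) : Prop := Clause.Inst C C' ∧ Clause.Inst C' C

/-! ### Specifications -/

/-- Membership of an extended atom in `S ∪ {!}`. -/
def EAtomIn (S : Set (Atom F Pr)) : EAtom F Pr → Prop
  | .cut => True
  | .atm A => A ∈ S

/-- `S ⊨ Q`: every atom of `Q` is in `S ∪ {!}`. -/
def SpecModels (S : Set (Atom F Pr)) (Q : Query F Pr) : Prop := ∀ a ∈ Q, EAtomIn S a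

/-- A set of atoms is closed under substitution. -/
def SubstClosed (S : Set (Atom F Pr)) : Prop := ∀ A ∈ S, ∀ θ : Subst F, Atom.subst θ A ∈ S

/-- The restriction of a set of atoms to ground atoms (to `HB`). -/
def HBRestrict (S : Set (Atom F Pr)) : Set (Atom F Pr) := {A ∈ S | A.Ground}

/-- A ground atom `A` is covered by clause `C` w.r.t. `S`:
`A` is the head of a ground instance of `C` whose body atoms are in `S ∪ {!}`. -/
def CoveredBy (S : Set (Atom F Pr)) (C : Clause F Pr) (A : Atom F Pr) : Prop :=
  ∃ θ : Subst F, Clause.Ground (Clause.subst θ C) ∧ Atom.subst θ C.head = A ∧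
    SpecModels S (Query.subst θ C.body)

/-- The least Herbrand model of `P` (the cut is treated as true). -/
inductive MP (P : Prog F Pr) : Atom F Pr → Prop where
  | step : ∀ C ∈ P, ∀ θ : Subst F, Clause.Ground (Clause.subst θ C) →
      (∀ A : Atom F Pr, EAtom.atm A ∈ Query.subst θ C.body → MP P A) →
      MP P (Atom.subst θ C.head)

/-! ### General interpretations and logical consequence -/

structure Interp (F Pr : Type) : Type 1 where
  carrier : Type
  fnI : F → List carrier → carrier
  predI : Pr → List carrier → Prop

def Interp.evalTm (I : Interp F Pr) (v : ℕ → I.carrier) : Tm F → I.carrier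
  | .var n => v n
  | .fn f ts => I.fnI f (ts.attach.map (fun t => I.evalTm v t.1))
decreasing_by
  have := List.sizeOf_lt_of_mem t.2
  simp only [Tm.fn.sizeOf_spec]
  omega

def Interp.holdsA (I : Interp F Pr) (v : ℕ → I.carrier) (A : Atom F Pr) : Prop :=
  I.predI A.pred (A.args.map (I.evalTm v))

/-- The cut is true in every interpretation. -/
def Interp.holdsE (I : Interp F Pr) (v : ℕ → I.carrier) : EAtom F Pr → Prop
  | .cut => True
  | .atm A => I.holdsA v A

def Interp.holdsQ (I : Interp F Pr) (v : ℕ → I.carrier) (Q : Query F Pr) : Prop :=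
  ∀ a ∈ Q, I.holdsE v a

def Interp.ModelsClause (I : Interp F Pr) (C : Clause F Pr) : Prop :=
  ∀ v : ℕ → I.carrier, I.holdsQ v C.body → I.holdsA v C.head

def Interp.ModelsProg (I : Interp F Pr) (P : Prog F Pr) : Prop :=
  ∀ C ∈ P, I.ModelsClause C

/-- `P ⊨ Q` (truth of a formula is truth of its universal closure). -/
def Entails (P : Prog F Pr) (Q : Query F Pr) : Prop :=
  ∀ I : Interp F Pr, I.ModelsProg P → ∀ v : ℕ → I.carrier, I.holdsQ v Q

/-- `M` (a set of ground atoms) is a Herbrand model of `P`. -/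
def HerbModels (M : Set (Atom F Pr)) (P : Prog F Pr) : Prop :=
  ∀ C ∈ P, ∀ θ : Subst F, Clause.Ground (Clause.subst θ C) →
    (∀ A : Atom F Pr, EAtom.atm A ∈ Query.subst θ C.body → A ∈ M) →
    Atom.subst θ C.head ∈ M

/-- Removing all occurrences of the cut from a query. -/
def rmCutQ (Q : Query F Pr) : Query F Pr :=
  Q.filterMap (fun a => match a with | .cut => none | .atm A => some (.atm A))

/-- Removing all occurrences of the cut from a program. -/
def rmCutProg (P : Prog F Pr) : Prog F Pr := P.map (fun C => ⟨C.head, rmCutQ C.body⟩)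

/-! ### LD-derivations -/

/-- Variables occurring in the queries `Q 0 … Q i`, the mgu's `sub 0 … sub (i-1)`
and the clause variants `cls 0 … cls (i-1)` of a derivation. -/
def histVars (Q : ℕ → Query F Pr) (sub : ℕ → Subst F)
    (cls : ℕ → Option (Clause F Pr)) (i : ℕ) : Set ℕ :=
  {n | (∃ j ≤ i, n ∈ Query.vars (Q j)) ∨ (∃ j < i, n ∈ (sub j).varSet) ∨
       (∃ j < i, ∃ C : Clause F Pr, cls j = some C ∧ n ∈ C.vars)}

/-- One LD-resolution step (names the clause variant used, if any):
either a leading cut is deleted, or the first atom is resolved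
with a clause via an idempotent relevant mgu. -/
def DStep (Q Q' : Query F Pr) (θ : Subst F) (oc : Option (Clause F Pr)) : Prop :=
  (∃ rest : Query F Pr, Q = .cut :: rest ∧ Q' = rest ∧ θ = Subst.idS ∧ oc = none) ∨
  (∃ (A : Atom F Pr) (rest : Query F Pr) (C : Clause F Pr),
      Q = .atm A :: rest ∧ oc = some C ∧
      IsMgu θ A C.head ∧ θ.Idempotent ∧ Relevant θ A C.head ∧
      Q' = Query.subst θ (C.body ++ rest))

/-- A finite LD-derivation: queries `Q 0, …, Q len`,
mgu's `sub 0, …, sub (len-1)` and clause variants `cls 0, …, cls (len-1)`,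
with clause variants standardized apart. -/
structure Deriv (F Pr : Type) : Type where
  len : ℕ
  Q : ℕ → Query F Pr
  sub : ℕ → Subst F
  cls : ℕ → Option (Clause F Pr)
  step : ∀ i < len, DStep (Q i) (Q (i+1)) (sub i) (cls i)
  fresh : ∀ i < len, ∀ C : Clause F Pr, cls i = some C →
    Disjoint C.vars (histVars Q sub cls i)

/-- The derivation only uses (variants of) clauses of the program `P`. -/
def Deriv.FromProg (P : Prog F Pr) (D : Deriv F Pr) : Prop :=
  ∀ i < D.len, ∀ C : Clause F Pr, D.cls i = some C → ∃ C0 ∈ P, Variant C C0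

def Deriv.Successful (D : Deriv F Pr) : Prop := D.Q D.len = []

/-- The computed answer `Q0 θ1 ⋯ θn` of a derivation. -/
def Deriv.answer (D : Deriv F Pr) : Query F Pr := Query.subst (compN D.sub 0 D.len) (D.Q 0)

/-- At position `j` the query has a (protected) suffix of length `L`; the prefix
before it succeeds exactly at position `m` (the subderivation for the prefix ends there). -/
def Deriv.SuffixEndsAt (D : Deriv F Pr) (j L m : ℕ) : Prop :=
  j ≤ m ∧ m ≤ D.len ∧ (∀ i, j ≤ i → i < m → L < (D.Q i).length) ∧ (D.Q m).length = L

/-- An infinite LD-derivation. -/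
structure InfLD (F Pr : Type) (P : Prog F Pr) : Type where
  Q : ℕ → Query F Pr
  sub : ℕ → Subst F
  cls : ℕ → Option (Clause F Pr)
  step : ∀ i : ℕ, DStep (Q i) (Q (i+1)) (sub i) (cls i)
  fresh : ∀ i : ℕ, ∀ C : Clause F Pr, cls i = some C →
    Disjoint C.vars (histVars Q sub cls i)
  prog : ∀ i : ℕ, ∀ C : Clause F Pr, cls i = some C → ∃ C0 ∈ P, Variant C C0

/-- One SLD-resolution step, with an arbitrarily selected atom. -/
def SStep (Q Q' : Query F Pr) (θ : Subst F) (oc : Option (Clause F Pr)) : Prop :=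
  (∃ l r : Query F Pr, Q = l ++ .cut :: r ∧ Q' = l ++ r ∧ θ = Subst.idS ∧ oc = none) ∨
  (∃ (l r : Query F Pr) (A : Atom F Pr) (C : Clause F Pr),
      Q = l ++ .atm A :: r ∧ oc = some C ∧
      IsMgu θ A C.head ∧ θ.Idempotent ∧ Relevant θ A C.head ∧
      Q' = Query.subst θ (l ++ C.body ++ r))

/-- An infinite SLD-derivation (under an arbitrary selection rule). -/
structure InfSLD (F Pr : Type) (P : Prog F Pr) : Type where
  Q : ℕ → Query F Pr
  sub : ℕ → Subst F
  cls : ℕ → Option (Clause F Pr)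
  step : ∀ i : ℕ, SStep (Q i) (Q (i+1)) (sub i) (cls i)
  fresh : ∀ i : ℕ, ∀ C : Clause F Pr, cls i = some C →
    Disjoint C.vars (histVars Q sub cls i)
  prog : ∀ i : ℕ, ∀ C : Clause F Pr, cls i = some C → ∃ C0 ∈ P, Variant C C0

/-! ### Unrestricted LD-derivations and lifts -/

/-- One step of an unrestricted LD-derivation for program `P`. -/
def UStep (P : Prog F Pr) (Q Q' : Query F Pr) (θ : Subst F)
    (oc : Option (Clause F Pr)) : Prop :=
  (∃ rest : Query F Pr, Q = .cut :: rest ∧ Q' = rest ∧ θ = Subst.idS ∧ oc = none) ∨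
  (∃ (A : Atom F Pr) (rest B : Query F Pr) (C : Clause F Pr),
      Q = .atm A :: rest ∧ oc = some C ∧ C ∈ P ∧ Subst.dom θ ⊆ Query.vars Q ∧
      Clause.Inst ⟨Atom.subst θ A, B⟩ C ∧ Q' = B ++ Query.subst θ rest)

/-- A finite unrestricted LD-derivation for `P`. -/
structure UDeriv (F Pr : Type) (P : Prog F Pr) : Type where
  len : ℕ
  Q : ℕ → Query F Pr
  sub : ℕ → Subst F
  cls : ℕ → Option (Clause F Pr)
  step : ∀ i < len, UStep P (Q i) (Q (i+1)) (sub i) (cls i)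

def UDeriv.Successful {P : Prog F Pr} (E : UDeriv F Pr P) : Prop := E.Q E.len = []

def UDeriv.answer {P : Prog F Pr} (E : UDeriv F Pr P) : Query F Pr :=
  Query.subst (compN E.sub 0 E.len) (E.Q 0)

/-- The LD-derivation `D` is a lift of the unrestricted LD-derivation `E`. -/
def IsLift {P : Prog F Pr} (D : Deriv F Pr) (E : UDeriv F Pr P) : Prop :=
  Query.Inst (E.Q 0) (D.Q 0) ∧ D.len = E.len ∧
  (∀ i < D.len, (E.cls i = none ↔ D.cls i = none) ∧
    ∀ C C' : Clause F Pr, E.cls i = some C → D.cls i = some C' → Variant C' C)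

/-! ### c-s-specifications (call-success specifications) -/

/-- `P` is c-s-correct w.r.t. `(pre, post)`: in every LD-derivation beginning with an
atomic query from `pre`, each selected atom is in `pre ∪ {!}` and each atomic computed
answer of a successful subderivation is in `post ∪ {!}`. -/
def CsCorrect (P : Prog F Pr) (pre post : Set (Atom F Pr)) : Prop :=
  ∀ D : Deriv F Pr, D.FromProg P → (∃ A ∈ pre, D.Q 0 = [.atm A]) →
    (∀ i ≤ D.len, ∀ (a : EAtom F Pr) (rest : Query F Pr), D.Q i = a :: rest →
        a = .cut ∨ ∃ A ∈ pre, a = .atm A) ∧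
    (∀ j m : ℕ, ∀ (A : Atom F Pr) (rest : Query F Pr), D.Q j = .atm A :: rest →
        D.SuffixEndsAt j rest.length m →
        Atom.subst (compN D.sub j (m - j)) A ∈ post)

/-- The `i`-th element of `Q` (if any) is in `S ∪ {!}`. -/
def QIn (S : Set (Atom F Pr)) (Q : Query F Pr) (i : ℕ) : Prop :=
  ∀ a : EAtom F Pr, Q[i]? = some a → EAtomIn S a

/-- A clause is well-asserted w.r.t. a c-s-specification `(pre, post)`. -/
def WellAssertedClause (pre post : Set (Atom F Pr)) (C : Clause F Pr) : Prop :=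
  ∀ θ : Subst F, Atom.subst θ C.head ∈ pre →
    (∀ k < C.body.length,
      (∀ i < k, QIn post (Query.subst θ C.body) i) → QIn pre (Query.subst θ C.body) k) ∧
    ((∀ i < C.body.length, QIn post (Query.subst θ C.body) i) → Atom.subst θ C.head ∈ post)

/-- A query is well-asserted w.r.t. `(pre, post)`. -/
def WellAssertedQuery (pre post : Set (Atom F Pr)) (Q : Query F Pr) : Prop :=
  ∀ θ : Subst F, ∀ k < Q.length,
    (∀ i < k, QIn post (Query.subst θ Q) i) → QIn pre (Query.subst θ Q) k

/-! ### c-coveredness -/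

/-- Ground atom `A` is c-covered w.r.t. `S` and `(pre, post)` by the clause `C`,
which is (a variant of) the `i`-th clause of `P`. -/
def CCoveredBy (P : Prog F Pr) (S pre post : Set (Atom F Pr)) (A : Atom F Pr)
    (C : Clause F Pr) (i : ℕ) : Prop :=
  (∃ C0 : Clause F Pr, P[i]? = some C0 ∧ Variant C C0) ∧
  CoveredBy S C A ∧
  (∀ j < i, ∀ (H' : Atom F Pr) (A0 A1 : Query F Pr),
      P[j]? = some ⟨H', A0 ++ .cut :: A1⟩ → EAtom.cut ∉ A0 → H'.pred = C.head.pred →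
      ∀ H'' ∈ pre, Atom.Inst A H'' →
        ∀ θ : Subst F, Atom.Ground (Atom.subst θ H'') →
          ¬ CoveredBy (HBRestrict post) ⟨H', A0⟩ (Atom.subst θ H'')) ∧
  (∀ B0 B1 : Query F Pr, C.body = B0 ++ .cut :: B1 →
    ∀ ρ : Subst F, Subst.dom ρ ⊆ C.head.vars → (Subst.rng ρ ∩ C.vars) ⊆ C.head.vars →
      Disjoint (Subst.dom ρ) (Subst.rng ρ) →
      Atom.subst ρ C.head ∈ pre → Atom.Inst A (Atom.subst ρ C.head) →
      ∀ η : Subst F, Subst.dom η = Query.vars (Query.subst ρ B0) →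
        Query.Ground (Query.subst η (Query.subst ρ B0)) →
        SpecModels post (Query.subst η (Query.subst ρ B0)) →
        CoveredBy S ⟨Atom.subst η (Atom.subst ρ C.head),
                     Query.subst η (Query.subst ρ B1)⟩ A)

/-- `A` is c-covered by some clause of `P`. -/
def CCoveredByProg (P : Prog F Pr) (S pre post : Set (Atom F Pr)) (A : Atom F Pr) : Prop :=
  ∃ (i : ℕ) (C : Clause F Pr), P[i]? = some C ∧ CCoveredBy P S pre post A C i

/-! ### Level mappings, recurrence, acceptability -/

/-- Extension of a level mapping to extended atoms, with `|!| = 0`. -/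
def eLvl (lvl : Atom F Pr → ℕ) : EAtom F Pr → ℕ
  | .cut => 0
  | .atm A => lvl A

/-- `P` is recurrent w.r.t. the level mapping `lvl`. -/
def Recurrent (P : Prog F Pr) (lvl : Atom F Pr → ℕ) : Prop :=
  ∀ C ∈ P, ∀ θ : Subst F, Clause.Ground (Clause.subst θ C) →
    ∀ a ∈ Query.subst θ C.body, eLvl lvl a < lvl (Atom.subst θ C.head)

/-- `P` is acceptable w.r.t. the specification `S` and the level mapping `lvl`. -/
def Acceptable (P : Prog F Pr) (S : Set (Atom F Pr)) (lvl : Atom F Pr → ℕ) : Prop :=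
  (∀ A : Atom F Pr, MP P A → A ∈ S) ∧
  (∀ C ∈ P, ∀ θ : Subst F, Clause.Ground (Clause.subst θ C) →
    ∀ i < C.body.length, (∀ j < i, QIn S (Query.subst θ C.body) j) →
      ∀ a : EAtom F Pr, (Query.subst θ C.body)[i]? = some a →
        eLvl lvl a < lvl (Atom.subst θ C.head))

/-- A query is bounded w.r.t. a level mapping. -/
def BoundedQuery (lvl : Atom F Pr → ℕ) (Q : Query F Pr) : Prop :=
  ∃ k : ℕ, ∀ a ∈ Q, ∀ θ : Subst F, EAtom.Ground (EAtom.subst θ a) →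
    eLvl lvl (EAtom.subst θ a) < k

/-! ### Completeness notions -/

/-- `P` is complete for the query `Q` w.r.t. `S`. -/
def CompleteFor (P : Prog F Pr) (S : Set (Atom F Pr)) (Q : Query F Pr) : Prop :=
  ∀ θ : Subst F, Query.Ground (Query.subst θ Q) → SpecModels S (Query.subst θ Q) →
    ∀ A : Atom F Pr, EAtom.atm A ∈ Query.subst θ Q → MP P A

end LP

namespace LP

variable {F Pr : Type}

/-! ### LD-trees and SLD-trees -/

/-- A clause is applicable to an atom if (a variant of) its head unifies with it. -/
def Applicable (A : Atom F Pr) (C0 : Clause F Pr) : Prop :=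
  ∃ (C : Clause F Pr) (θ : Subst F), Variant C C0 ∧ Atom.subst θ A = Atom.subst θ C.head

open Classical in
/-- The clauses of `P` applicable to `A`, in program order. -/
noncomputable def applicables (P : Prog F Pr) (A : Atom F Pr) : Prog F Pr :=
  P.filter (fun C0 => decide (Applicable A C0))

/-- Variables occurring in the labels, mgu's and clause variants along the path
from the root to `p` (inclusive). -/
def pathVarsAux (label : List ℕ → Query F Pr) (esub : List ℕ → Subst F)
    (ecls : List ℕ → Option (Clause F Pr)) (p : List ℕ) : Set ℕ :=
  {n | ∃ q : List ℕ, q <+: p ∧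
        (n ∈ Query.vars (label q) ∨ n ∈ (esub q).varSet ∨
         ∃ C : Clause F Pr, ecls q = some C ∧ n ∈ C.vars)}

/-- The LD-tree for a program `P` and an initial query `Q0`.  Nodes are coded by
lists of child indices (the root is `[]`); `label` gives the query at a node,
`esub` and `ecls` the mgu and the clause variant of the edge into a node. -/
structure LDTree (F Pr : Type) (P : Prog F Pr) (Q0 : Query F Pr) : Type where
  dom : Set (List ℕ)
  label : List ℕ → Query F Pr
  esub : List ℕ → Subst F
  ecls : List ℕ → Option (Clause F Pr)
  root_mem : [] ∈ dom
  root_label : label [] = Q0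
  root_esub : esub [] = Subst.idS
  root_ecls : ecls [] = none
  prefix_closed : ∀ p q : List ℕ, p <+: q → q ∈ dom → p ∈ dom
  sibling_closed : ∀ (p : List ℕ) (k k' : ℕ), k' ≤ k → p ++ [k] ∈ dom → p ++ [k'] ∈ dom
  empty_leaf : ∀ p ∈ dom, label p = [] → ∀ k : ℕ, p ++ [k] ∉ dom
  cut_step : ∀ p ∈ dom, ∀ rest : Query F Pr, label p = .cut :: rest →
    (p ++ [0] ∈ dom ∧ label (p ++ [0]) = rest ∧ esub (p ++ [0]) = Subst.idS ∧
     ecls (p ++ [0]) = none ∧ ∀ k : ℕ, k ≠ 0 → p ++ [k] ∉ dom)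
  atom_children_mem : ∀ p ∈ dom, ∀ (A : Atom F Pr) (rest : Query F Pr),
    label p = .atm A :: rest →
    ∀ k : ℕ, (p ++ [k] ∈ dom ↔ k < (applicables P A).length)
  atom_step : ∀ p ∈ dom, ∀ (A : Atom F Pr) (rest : Query F Pr),
    label p = .atm A :: rest → ∀ k : ℕ, p ++ [k] ∈ dom →
      ∃ C C0 : Clause F Pr, (applicables P A)[k]? = some C0 ∧
        ecls (p ++ [k]) = some C ∧ Variant C C0 ∧
        IsMgu (esub (p ++ [k])) A C.head ∧ (esub (p ++ [k])).Idempotent ∧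
        Relevant (esub (p ++ [k])) A C.head ∧
        label (p ++ [k]) = Query.subst (esub (p ++ [k])) (C.body ++ rest) ∧
        Disjoint C.vars (pathVarsAux label esub ecls p)

/-- An SLD-tree for `P` and `Q0`, under the selection rule `sel`
(`sel p` is the position of the selected atom of the query at node `p`). -/
structure SLDTree (F Pr : Type) (P : Prog F Pr) (Q0 : Query F Pr) : Type where
  dom : Set (List ℕ)
  label : List ℕ → Query F Pr
  sel : List ℕ → ℕ
  esub : List ℕ → Subst F
  ecls : List ℕ → Option (Clause F Pr)
  root_mem : [] ∈ dom
  root_label : label [] = Q0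
  root_esub : esub [] = Subst.idS
  root_ecls : ecls [] = none
  prefix_closed : ∀ p q : List ℕ, p <+: q → q ∈ dom → p ∈ dom
  sibling_closed : ∀ (p : List ℕ) (k k' : ℕ), k' ≤ k → p ++ [k] ∈ dom → p ++ [k'] ∈ dom
  empty_leaf : ∀ p ∈ dom, label p = [] → ∀ k : ℕ, p ++ [k] ∉ dom
  sel_lt : ∀ p ∈ dom, label p ≠ [] → sel p < (label p).length
  cut_step : ∀ p ∈ dom, ∀ l r : Query F Pr, label p = l ++ .cut :: r → sel p = l.length →
    (p ++ [0] ∈ dom ∧ label (p ++ [0]) = l ++ r ∧ esub (p ++ [0]) = Subst.idS ∧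
     ecls (p ++ [0]) = none ∧ ∀ k : ℕ, k ≠ 0 → p ++ [k] ∉ dom)
  atom_children_mem : ∀ p ∈ dom, ∀ (l : Query F Pr) (A : Atom F Pr) (r : Query F Pr),
    label p = l ++ .atm A :: r → sel p = l.length →
    ∀ k : ℕ, (p ++ [k] ∈ dom ↔ k < (applicables P A).length)
  atom_step : ∀ p ∈ dom, ∀ (l : Query F Pr) (A : Atom F Pr) (r : Query F Pr),
    label p = l ++ .atm A :: r → sel p = l.length → ∀ k : ℕ, p ++ [k] ∈ dom →
      ∃ C C0 : Clause F Pr, (applicables P A)[k]? = some C0 ∧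
        ecls (p ++ [k]) = some C ∧ Variant C C0 ∧
        IsMgu (esub (p ++ [k])) A C.head ∧ (esub (p ++ [k])).Idempotent ∧
        Relevant (esub (p ++ [k])) A C.head ∧
        label (p ++ [k]) = Query.subst (esub (p ++ [k])) (l ++ C.body ++ r) ∧
        Disjoint C.vars (pathVarsAux label esub ecls p)

/-- `P` is semi-complete w.r.t. `S`: complete for every query possessing a finite SLD-tree. -/
def SemiComplete (P : Prog F Pr) (S : Set (Atom F Pr)) : Prop :=
  ∀ Q : Query F Pr, (∃ T : SLDTree F Pr P Q, T.dom.Finite) → CompleteFor P S Q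

/-! ### The preorder sequence `seq(T)` and pruning -/

/-- The subtree of `S` rooted at `q` is finite. -/
def SubtreeFin (S : Set (List ℕ)) (q : List ℕ) : Prop := {x ∈ S | q <+: x}.Finite

/-- Node `p` occurs in the preorder sequence `seq` of the subgraph `S`:
all subtrees to the left of the path to `p` are finite. -/
def InSeq (S : Set (List ℕ)) (p : List ℕ) : Prop :=
  p ∈ S ∧ ∀ (q : List ℕ) (k k' : ℕ), (q ++ [k]) <+: p → k' < k → SubtreeFin S (q ++ [k'])

/-- `p` strictly precedes `q` in the preorder ordering of tree nodes. -/
def PreLt (p q : List ℕ) : Prop :=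
  (p <+: q ∧ p ≠ q) ∨
  ∃ (r : List ℕ) (a b : ℕ), a < b ∧ (r ++ [a]) <+: p ∧ (r ++ [b]) <+: q

variable {P : Prog F Pr} {Q0 : Query F Pr}

/-- An executing node: a node whose query starts with the cut. -/
def LDTree.ExecNode (T : LDTree F Pr P Q0) (e : List ℕ) : Prop :=
  ∃ rest : Query F Pr, T.label e = .cut :: rest

/-- `s` is the first node `Q_j` of the cutting sequence of the executing node `e`:
the protected suffix of length `|label e|` persists from `s` to `e`,
and `s` is the shallowest such node. -/
def LDTree.CutStart (T : LDTree F Pr P Q0) (e s : List ℕ) : Prop :=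
  s <+: e ∧
  (∀ q : List ℕ, s <+: q → q <+: e → q ≠ e → (T.label e).length < (T.label q).length) ∧
  (s = [] ∨ ∃ (p : List ℕ) (k : ℕ), s = p ++ [k] ∧
      ¬ ((T.label e).length < (T.label p).length))

/-- The introducing node of a cutting sequence starting at `s`
(for a cut of the initial query it is the root itself). -/
def cutIntro (s : List ℕ) : List ℕ := if s = [] then [] else s.dropLast

/-- `x` is pruned by (the cutting sequence of) the executing node `e`:
`x` lies in a subtree rooted at a child, to the right of the cutting sequence,
of a node of the cutting sequence. -/
def LDTree.PrunedByExec (T : LDTree F Pr P Q0) (e x : List ℕ) : Prop :=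
  T.ExecNode e ∧ ∃ s : List ℕ, T.CutStart e s ∧
    ∃ (q : List ℕ) (k k' : ℕ), cutIntro s <+: q ∧ (q ++ [k]) <+: e ∧ k < k' ∧
      (q ++ [k']) <+: x

/-- `e` is the (n+1)-st executing node in the preorder sequence of the subgraph `S`. -/
def LDTree.IsNthExec (T : LDTree F Pr P Q0) (S : Set (List ℕ)) (n : ℕ) (e : List ℕ) : Prop :=
  e ∈ S ∧ T.ExecNode e ∧ InSeq S e ∧
  {e' : List ℕ | e' ∈ S ∧ T.ExecNode e' ∧ InSeq S e' ∧ PreLt e' e}.Finite ∧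
  {e' : List ℕ | e' ∈ S ∧ T.ExecNode e' ∧ InSeq S e' ∧ PreLt e' e}.ncard = n

/-- The sequence of trees `T_0, T_1, …` of the definition of the pruned LD-tree. -/
def LDTree.stage (T : LDTree F Pr P Q0) : ℕ → Set (List ℕ)
  | 0 => T.dom
  | n+1 => T.stage n \
      {x : List ℕ | ∃ e : List ℕ, T.IsNthExec (T.stage n) n e ∧ T.PrunedByExec e x}

/-- The pruned LD-tree `pruned(T)`: the nodes surviving all stages
and occurring in the preorder sequence of the resulting subgraph. -/
def LDTree.prunedDom (T : LDTree F Pr P Q0) : Set (List ℕ) :=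
  {p ∈ ⋂ n : ℕ, T.stage n | InSeq (⋂ n : ℕ, T.stage n) p}

/-- Composition of the mgu's along a path (auxiliary, from node `q` down `rest`). -/
def LDTree.branchSubstAux (T : LDTree F Pr P Q0) : List ℕ → List ℕ → Subst F
  | _, [] => Subst.idS
  | q, k :: rest => Subst.comp (T.esub (q ++ [k])) (T.branchSubstAux (q ++ [k]) rest)

/-- Composition of the mgu's along the branch from the root to `p`. -/
def LDTree.branchSubst (T : LDTree F Pr P Q0) (p : List ℕ) : Subst F :=
  T.branchSubstAux [] p

/-- The node `p` occurs in a cutting sequence of the subgraph `S` of `T`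
only as its introducing node. -/
def LDTree.OnlyIntro (T : LDTree F Pr P Q0) (S : Set (List ℕ)) (p : List ℕ) : Prop :=
  ∀ e s : List ℕ, e ∈ S → T.ExecNode e → T.CutStart e s →
    (∀ q : List ℕ, cutIntro s <+: q → q <+: e → q ∈ S) →
    cutIntro s <+: p → p <+: e → (s ≠ [] ∧ p = cutIntro s)

end LP

namespace LP

/-! ### Substitutions and variables -/

theorem Tm.subst_congr {F : Type} {θ σ : Subst F} :
    ∀ t : Tm F, (∀ n ∈ t.vars, θ n = σ n) → t.subst θ = t.subst σ
  | .var n, h => by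
      simp only [Tm.subst]
      exact h n (by simp [Tm.vars, Tm.varsL])
  | .fn f ts, h => by
      simp only [Tm.subst]
      congr 1
      refine List.map_congr_left fun t _ => Tm.subst_congr t.1 fun n hn => h n ?_
      simp only [Tm.vars, Tm.varsL, Set.mem_ofPred_eq, List.mem_flatMap]
      exact ⟨t, List.mem_attach _ _, hn⟩
decreasing_by
  have := List.sizeOf_lt_of_mem t.2
  simp only [Tm.fn.sizeOf_spec]
  omega

theorem Tm.subst_subst {F : Type} (θ σ : Subst F) :
    ∀ t : Tm F, (t.subst θ).subst σ = t.subst (Subst.comp θ σ)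
  | .var n => by simp only [Tm.subst, Subst.comp]
  | .fn f ts => by
      have ih : ∀ t : {x // x ∈ ts},
          (t.1.subst θ).subst σ = t.1.subst (Subst.comp θ σ) :=
        fun t => Tm.subst_subst θ σ t.1
      simp only [Tm.subst, List.map_attach_eq_pmap,
        List.pmap_eq_map, List.map_map]
      congr 1
      exact List.map_congr_left fun t ht => ih ⟨t, ht⟩
decreasing_by
  have := List.sizeOf_lt_of_mem t.2
  simp only [Tm.fn.sizeOf_spec]
  omega

theorem Tm.subst_idS {F : Type} : ∀ t : Tm F, t.subst Subst.idS = t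
  | .var n => by simp only [Tm.subst, Subst.idS]
  | .fn f ts => by
      have ih : ∀ t : {x // x ∈ ts}, t.1.subst Subst.idS = t.1 := fun t => Tm.subst_idS t.1
      simp only [Tm.subst]
      congr 1
      rw [List.map_congr_left fun t _ => ih t, List.attach_map_subtype_val]
decreasing_by
  have := List.sizeOf_lt_of_mem t.2
  simp only [Tm.fn.sizeOf_spec]
  omega

theorem Tm.mem_vars_subst {F : Type} (θ : Subst F) {n : ℕ} :
    ∀ t : Tm F, n ∈ (t.subst θ).vars → ∃ m ∈ t.vars, n ∈ (θ m).vars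
  | .var m, h => ⟨m, by simp [Tm.vars, Tm.varsL], by simpa only [Tm.subst] using h⟩
  | .fn f ts, h => by
      have ih : ∀ t : {x // x ∈ ts}, n ∈ (t.1.subst θ).vars →
          ∃ m ∈ t.1.vars, n ∈ (θ m).vars := fun t => Tm.mem_vars_subst θ t.1
      simp only [Tm.vars, Tm.subst, Tm.varsL, Set.mem_ofPred_eq, List.mem_flatMap] at h
      obtain ⟨⟨u, hu⟩, -, hn⟩ := h
      obtain ⟨t, -, rfl⟩ := List.mem_map.1 hu
      obtain ⟨m, hm, hmn⟩ := ih t hn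
      refine ⟨m, ?_, hmn⟩
      simp only [Tm.vars, Tm.varsL, Set.mem_ofPred_eq, List.mem_flatMap]
      exact ⟨t, List.mem_attach _ _, hm⟩
decreasing_by
  have := List.sizeOf_lt_of_mem t.2
  simp only [Tm.fn.sizeOf_spec]
  omega

theorem Atom.subst_congr {F Pr : Type} {θ σ : Subst F} (A : Atom F Pr)
    (h : ∀ n ∈ A.vars, θ n = σ n) : A.subst θ = A.subst σ := by
  simp only [Atom.subst]
  congr 1
  exact List.map_congr_left fun t ht => Tm.subst_congr t fun n hn => h n ⟨t, ht, hn⟩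

theorem Atom.subst_subst {F Pr : Type} (θ σ : Subst F) (A : Atom F Pr) :
    (A.subst θ).subst σ = A.subst (Subst.comp θ σ) := by
  simp [Atom.subst, Tm.subst_subst]

theorem Query.subst_congr {F Pr : Type} {θ σ : Subst F} (Q : Query F Pr)
    (h : ∀ n ∈ Query.vars Q, θ n = σ n) : Query.subst θ Q = Query.subst σ Q := by
  refine List.map_congr_left fun a ha => ?_
  cases a with
  | cut => rfl
  | atm A =>
    exact congrArg EAtom.atm (Atom.subst_congr A fun n hn => h n ⟨_, ha, hn⟩)

theorem Query.subst_subst {F Pr : Type} (θ σ : Subst F) (Q : Query F Pr) :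
    Query.subst σ (Query.subst θ Q) = Query.subst (Subst.comp θ σ) Q := by
  simp only [Query.subst, List.map_map]
  refine List.map_congr_left fun a _ => ?_
  cases a with
  | cut => rfl
  | atm A => exact congrArg EAtom.atm (Atom.subst_subst θ σ A)

theorem Query.subst_idS {F Pr : Type} (Q : Query F Pr) : Query.subst Subst.idS Q = Q := by
  have : ∀ a : EAtom F Pr, a.subst Subst.idS = a := by
    rintro (_ | ⟨p, ts⟩)
    · rfl
    · have : Tm.subst (F := F) Subst.idS = id := funext Tm.subst_idS
      simp [EAtom.subst, Atom.subst, this]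
  have : EAtom.subst (F := F) (Pr := Pr) Subst.idS = id := funext this
  simp [Query.subst, this]

theorem Query.mem_vars_subst {F Pr : Type} (θ : Subst F) {n : ℕ} (Q : Query F Pr)
    (h : n ∈ Query.vars (Query.subst θ Q)) : ∃ m ∈ Query.vars Q, n ∈ (θ m).vars := by
  obtain ⟨b, hb, hn⟩ := h
  obtain ⟨a, ha, rfl⟩ := List.mem_map.1 hb
  cases a with
  | cut => exact hn.elim
  | atm A =>
    obtain ⟨u, hu, hn⟩ := hn
    obtain ⟨t, ht, rfl⟩ := List.mem_map.1 hu
    obtain ⟨m, hm, hmn⟩ := Tm.mem_vars_subst θ t hn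
    exact ⟨m, ⟨_, ha, t, ht, hm⟩, hmn⟩

theorem Query.vars_subst_subset {F Pr : Type} (θ : Subst F) (Q : Query F Pr) :
    Query.vars (Query.subst θ Q) ⊆ Query.vars Q ∪ θ.rng := by
  intro n hn
  obtain ⟨m, hm, hmn⟩ := Query.mem_vars_subst θ Q hn
  by_cases hθ : θ m = .var m
  · left
    rw [hθ] at hmn
    have : n = m := by simpa [Tm.vars, Tm.varsL] using hmn
    exact this ▸ hm
  · exact Or.inr ⟨m, hθ, hmn⟩

theorem Query.subst_append {F Pr : Type} (θ : Subst F) (Q Q' : Query F Pr) :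
    Query.subst θ (Q ++ Q') = Query.subst θ Q ++ Query.subst θ Q' := List.map_append

/-- `compN` peels off its first substitution by definition; peeling off the last one
needs associativity of composition. -/
theorem Query.subst_compN_succ {F Pr : Type} (θ : ℕ → Subst F) (k : ℕ) :
    ∀ (i : ℕ) (Q : Query F Pr), Query.subst (compN θ i (k + 1)) Q =
      Query.subst (θ (i + k)) (Query.subst (compN θ i k) Q) := by
  induction k with
  | zero =>
    intro i Q
    simp only [compN, ← Query.subst_subst, Query.subst_idS, Nat.add_zero]
  | succ k ih =>
    intro i Q
    rw [compN, ← Query.subst_subst, ih, compN, ← Query.subst_subst]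
    congr 2
    omega

/-! ### Lifting -/

/-- The variables of a partially computed instance `Q_i θ_{i+1} ⋯ θ_{i+k}` belong to the history
of the derivation, so that later clause variants avoid them. -/
theorem vars_answer_subset {F Pr : Type} (Q : ℕ → Query F Pr) (sub : ℕ → Subst F)
    (cls : ℕ → Option (Clause F Pr)) (i k : ℕ) :
    Query.vars (Query.subst (compN sub i k) (Q i)) ⊆ histVars Q sub cls (i + k) := by
  induction k with
  | zero =>
    rw [compN, Query.subst_idS]
    exact fun n hn => Or.inl ⟨i, Nat.le_add_right _ _, hn⟩
  | succ k ih =>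
    rw [Query.subst_compN_succ]
    intro n hn
    rcases Query.vars_subst_subset _ _ hn with hn | hn
    · rcases ih hn with ⟨j, hj, h⟩ | ⟨j, hj, h⟩ | ⟨j, hj, h⟩
      · exact Or.inl ⟨j, by omega, h⟩
      · exact Or.inr (Or.inl ⟨j, by omega, h⟩)
      · exact Or.inr (Or.inr ⟨j, by omega, h⟩)
    · exact Or.inr (Or.inl ⟨i + k, by omega, Or.inr hn⟩)

/-- Lifting of one step.  The query `X` stands for a partially computed instance of an earlier
query; the same witness `δ'` serves for the resolvents and for `X`. -/
theorem lift_step {F Pr : Type} {P : Prog F Pr} {Q Q' R R' X : Query F Pr} {θ α δ : Subst F}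
    {oc oe : Option (Clause F Pr)} (hD : DStep Q Q' θ oc) (hE : UStep P R R' α oe)
    (hnone : oe = none ↔ oc = none)
    (hvar : ∀ C C' : Clause F Pr, oe = some C → oc = some C' → Variant C' C)
    (hfresh : ∀ C : Clause F Pr, oc = some C →
      Disjoint C.vars (Query.vars Q) ∧ Disjoint C.vars (Query.vars X))
    (hR : R = Query.subst δ Q) :
    ∃ δ' : Subst F, R' = Query.subst δ' Q' ∧
      Query.subst α (Query.subst δ X) = Query.subst δ' (Query.subst θ X) := by
  classical
  rcases hD with ⟨rest, rfl, rfl, rfl, rfl⟩ | ⟨A, rest, C', rfl, rfl, hmgu, -, -, rfl⟩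
  · rcases hE with ⟨rest', hRc, rfl, rfl, -⟩ | ⟨_, _, _, C, _, rfl, _⟩
    · refine ⟨δ, ?_, by simp only [Query.subst_idS]⟩
      rw [hRc] at hR
      exact (List.cons.inj hR).2
    · exact absurd (hnone.2 rfl) (Option.some_ne_none C)
  · rcases hE with ⟨rest', _, _, _, rfl⟩ | ⟨A', rest', B, C, rfl, rfl, -, -, hinst, rfl⟩
    · exact absurd (hnone.1 rfl) (Option.some_ne_none C')
    obtain ⟨hA, hrest⟩ := List.cons.inj hR
    have hA : A' = A.subst δ := EAtom.atm.inj hA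
    obtain ⟨η₀, hη₀⟩ := hinst
    obtain ⟨-, ρ, hρ⟩ := hvar C C' rfl rfl
    obtain ⟨hfQ, hfX⟩ := hfresh C' rfl
    -- `(H ← B) η` is the clause instance used by the unrestricted step, `H ← B` being `C'`.
    set η := Subst.comp ρ η₀ with hη
    have hhead : A'.subst α = C'.head.subst η := by
      have := congrArg Clause.head hη₀
      rw [hρ] at this
      simpa only [Clause.subst, Atom.subst_subst] using this
    have hbody : B = Query.subst η C'.body := by
      have := congrArg Clause.body hη₀
      rw [hρ] at this
      simpa only [Clause.subst, Query.subst_subst] using this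
    let σ : Subst F := fun n => if n ∈ C'.vars then η n else Subst.comp δ α n
    have hσC : ∀ n ∈ C'.vars, σ n = η n := fun n hn => if_pos hn
    have hσ : ∀ S : Set ℕ, Disjoint C'.vars S → ∀ n ∈ S, σ n = Subst.comp δ α n :=
      fun S hS n hn => if_neg fun hn' => Set.disjoint_left.1 hS hn' hn
    have hσA : A.subst σ = A'.subst α := by
      rw [hA, Atom.subst_subst]
      exact Atom.subst_congr A fun n hn => hσ _ hfQ n ⟨_, List.mem_cons_self, hn⟩
    have hσH : C'.head.subst σ = C'.head.subst η :=
      Atom.subst_congr _ fun n hn => hσC n (Or.inl hn)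
    obtain ⟨δ', hδ'⟩ := hmgu.2 σ (hσA.trans (hhead.trans hσH.symm))
    have hfac : σ = Subst.comp θ δ' := funext hδ'
    refine ⟨δ', ?_, ?_⟩
    · rw [Query.subst_subst, ← hfac, Query.subst_append, hbody, hrest]
      congr 1
      · exact Query.subst_congr _ fun n hn => (hσC n (Or.inr hn)).symm
      · change Query.subst α (Query.subst δ rest) = _
        rw [Query.subst_subst]
        refine Query.subst_congr _ fun n hn => (hσ _ hfQ n ?_).symm
        obtain ⟨a, ha, hn⟩ := hn
        exact ⟨a, List.mem_cons_of_mem _ ha, hn⟩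
    · rw [Query.subst_subst, Query.subst_subst, ← hfac]
      exact Query.subst_congr _ fun n hn => (hσ _ hfX n hn).symm

/-- Once `R_i` is an instance of `Q_i`, a single substitution `δ` witnesses both that `R_{i+k}` is
an instance of `Q_{i+k}` and that `R_i α_{i+1} ⋯ α_{i+k}` is one of `Q_i θ_{i+1} ⋯ θ_{i+k}`. -/
theorem lift_invariant {F Pr : Type} {P : Prog F Pr} {D : Deriv F Pr} {E : UDeriv F Pr P}
    (h : IsLift D E) {i : ℕ} (hi : Query.Inst (E.Q i) (D.Q i)) (k : ℕ) (hk : i + k ≤ D.len) :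
    ∃ δ : Subst F, E.Q (i + k) = Query.subst δ (D.Q (i + k)) ∧
      Query.subst (compN E.sub i k) (E.Q i) =
        Query.subst δ (Query.subst (compN D.sub i k) (D.Q i)) := by
  induction k with
  | zero =>
    obtain ⟨δ, hδ⟩ := hi
    exact ⟨δ, hδ, by simpa only [compN, Query.subst_idS] using hδ⟩
  | succ k ih =>
    obtain ⟨δ, hδ, hX⟩ := ih (by omega)
    have hlt : i + k < D.len := by omega
    obtain ⟨hnone, hvar⟩ := h.2.2 _ hlt
    obtain ⟨δ', h₁, h₂⟩ := lift_step (X := Query.subst (compN D.sub i k) (D.Q i))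
      (D.step _ hlt) (E.step _ (h.2.1 ▸ hlt)) hnone hvar
      (fun C hC => ⟨(D.fresh _ hlt C hC).mono_right fun n hn => Or.inl ⟨_, le_rfl, hn⟩,
        (D.fresh _ hlt C hC).mono_right (vars_answer_subset D.Q D.sub D.cls i k)⟩) hδ
    exact ⟨δ', h₁, by rw [Query.subst_compN_succ, Query.subst_compN_succ, hX, h₂]⟩

/-- **Lifting (Corollary 2 of the paper, remaining parts).**  If the LD-derivation `D`
is a lift of the unrestricted LD-derivation `E`, then each `R_i` is an instance of
`Q_i` (hence `D` is successful iff `E` is), each `R_i α_{i+1}⋯α_j` is an instance of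
`Q_i θ_{i+1}⋯θ_j`, and if `E` is successful then the answer of `E` is an instance of
the answer of `D`. -/
theorem lift_instances {F Pr : Type} (P : Prog F Pr)
    (D : Deriv F Pr) (hP : D.FromProg P) (E : UDeriv F Pr P) (h : IsLift D E) :
    (∀ i ≤ D.len, Query.Inst (E.Q i) (D.Q i)) ∧
    (D.Successful ↔ E.Successful) ∧
    (∀ i j : ℕ, i ≤ j → j ≤ D.len →
      Query.Inst (Query.subst (compN E.sub i (j - i)) (E.Q i))
                 (Query.subst (compN D.sub i (j - i)) (D.Q i))) ∧
    (E.Successful → Query.Inst E.answer D.answer) := by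
  have hinst : ∀ i ≤ D.len, Query.Inst (E.Q i) (D.Q i) := by
    intro i hi
    obtain ⟨δ, hδ, -⟩ := lift_invariant h h.1 i (by omega)
    rw [Nat.zero_add] at hδ
    exact ⟨δ, hδ⟩
  have hans : ∀ i j : ℕ, i ≤ j → j ≤ D.len →
      Query.Inst (Query.subst (compN E.sub i (j - i)) (E.Q i))
                 (Query.subst (compN D.sub i (j - i)) (D.Q i)) := by
    intro i j hij hj
    obtain ⟨δ, -, hδ⟩ := lift_invariant h (hinst i (by omega)) (j - i) (by omega)
    exact ⟨δ, hδ⟩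
  refine ⟨hinst, ?_, hans, fun _ => ?_⟩
  · obtain ⟨δ, hδ⟩ := hinst D.len le_rfl
    rw [Deriv.Successful, UDeriv.Successful, ← h.2.1, hδ, Query.subst, List.map_eq_nil_iff]
  · have := hans 0 D.len (Nat.zero_le _) le_rfl
    rw [Nat.sub_zero] at this
    rw [UDeriv.answer, Deriv.answer, ← h.2.1]
    exact this

end LP
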